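/- arXiv:1110.5381 — 2 statements merged into one kernel-verified Lean document; each statement's English description precedes it below -/
import Mathlib

section
/- Let Δ_n(t) := ψ(t) − ψ_n(t) and r_n(t) := μ φ'(t) ψ_n(t) − ψ_n'(t). If |r_n(s)| ≤ K for all s ∈ [0, t], then |Δ_n(t)| ≤ e^{2μ} ∫_0^t |r_n(s)| ds ≤ e^{2μ} K t for all t ≥ 0. -/
/-!
The integrating factor `exp (-μ (φ - 1)) = 1 / ψ` turns `ψ_n` into `h = ψ_n / ψ`, which satisfies
`h 0 = 1` and `h' = -exp (-μ (φ - 1)) r_n`. Hence `Δ_n t = ψ t (1 - h t)`, where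
`1 - h t = ∫_0^t exp (-μ (φ s - 1)) r_n s ds`. Since `|φ| ≤ 1`, the real part of `φ - 1` lies in
`[-2, 0]`, so `|ψ t| ≤ 1` and the integrating factor has modulus at most `e^{2μ}`. Both
characteristic functions are `C¹` by integrability, which justifies the fundamental theorem of
calculus.
-/


open MeasureTheory ProbabilityTheory Filter Set

/-- The characteristic function of a real random variable `X` under the measure `P`. -/
noncomputable def charFn {Ω : Type*} [MeasurableSpace Ω] (P : Measure Ω) (X : Ω → ℝ) (t : ℝ) : ℂ :=
  ∫ ω, Complex.exp (Complex.I * t * X ω) ∂P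

lemma charFn_eq_charFun {Ω : Type*} [MeasurableSpace Ω] (P : Measure Ω) (X : Ω → ℝ)
    (hX : Measurable X) : charFn P X = charFun (P.map X) := by
  funext t
  rw [charFun_apply_real, charFn, integral_map hX.aemeasurable (by fun_prop)]
  congr 1 with ω
  congr 1
  ring

lemma contDiff_charFn {Ω : Type*} [MeasurableSpace Ω] (P : Measure Ω) [IsProbabilityMeasure P]
    (X : Ω → ℝ) (hX : Measurable X) (hint : Integrable X P) : ContDiff ℝ 1 (charFn P X) := by
  have : IsProbabilityMeasure (P.map X) := Measure.isProbabilityMeasure_map hX.aemeasurable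
  have hid : MemLp id ((1 : ℕ) : ENNReal) (P.map X) := by
    rw [memLp_map_measure_iff (by fun_prop) hX.aemeasurable]
    simpa [memLp_one_iff_integrable] using hint
  rw [charFn_eq_charFun P X hX]
  exact_mod_cast contDiff_charFun hid

lemma norm_charFn_le_one {Ω : Type*} [MeasurableSpace Ω] (P : Measure Ω) [IsProbabilityMeasure P]
    (X : Ω → ℝ) (hX : Measurable X) (t : ℝ) : ‖charFn P X t‖ ≤ 1 := by
  have : IsProbabilityMeasure (P.map X) := Measure.isProbabilityMeasure_map hX.aemeasurable
  rw [charFn_eq_charFun P X hX]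
  exact norm_charFun_le_one t

lemma charFn_zero {Ω : Type*} [MeasurableSpace Ω] (P : Measure Ω) [IsProbabilityMeasure P]
    (X : Ω → ℝ) : charFn P X 0 = 1 := by
  simp [charFn]

/-- With `ψ t = exp (μ (φ t - 1))`, `ψ_n` the characteristic function of the integrable random
variable `S_n`, `Δ_n t = ψ t - ψ_n t` and `r_n t = μ φ' t ψ_n t - ψ_n' t`: if `|r_n s| ≤ K` on
`[0, t]`, then `|Δ_n t| ≤ e^{2μ} ∫_0^t |r_n s| ds ≤ e^{2μ} K t` for all `t ≥ 0`. -/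
theorem delta_bound
    {Ω : Type*} {mΩ : MeasurableSpace Ω} (P : Measure Ω) [IsProbabilityMeasure P]
    (ξ : Ω → ℝ) (hξmeas : Measurable ξ) (hξint : Integrable ξ P)
    {Ω' : Type*} {mΩ' : MeasurableSpace Ω'} (P' : Measure Ω') [IsProbabilityMeasure P']
    (S : Ω' → ℝ) (hSmeas : Measurable S) (hSint : Integrable S P')
    (μ : ℝ) (hμ : 0 < μ)
    (φ : ℝ → ℂ) (hφ : φ = charFn P ξ)
    (ψ : ℝ → ℂ) (hψ : ψ = fun t => Complex.exp ((μ : ℂ) * (φ t - 1)))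
    (ψn : ℝ → ℂ) (hψn : ψn = charFn P' S)
    (Δn : ℝ → ℂ) (hΔn : Δn = fun t => ψ t - ψn t)
    (rn : ℝ → ℂ) (hrn : rn = fun t => (μ : ℂ) * deriv φ t * ψn t - deriv ψn t)
    (K : ℝ) :
    ∀ t : ℝ, 0 ≤ t → (∀ s ∈ Set.Icc (0 : ℝ) t, ‖rn s‖ ≤ K) →
      ‖Δn t‖ ≤ Real.exp (2 * μ) * ∫ s in (0 : ℝ)..t, ‖rn s‖ ∧
      Real.exp (2 * μ) * (∫ s in (0 : ℝ)..t, ‖rn s‖) ≤ Real.exp (2 * μ) * K * t := by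
  intro t ht hK
  have hφC : ContDiff ℝ 1 φ := hφ ▸ contDiff_charFn P ξ hξmeas hξint
  have hψnC : ContDiff ℝ 1 ψn := hψn ▸ contDiff_charFn P' S hSmeas hSint
  have hφ0 : φ 0 = 1 := hφ ▸ charFn_zero P ξ
  have hψn0 : ψn 0 = 1 := hψn ▸ charFn_zero P' S
  have hre : ∀ s, -1 ≤ (φ s).re ∧ (φ s).re ≤ 1 := fun s =>
    abs_le.mp ((Complex.abs_re_le_norm _).trans (hφ ▸ norm_charFn_le_one P ξ hξmeas s))
  have hφ'c : Continuous (deriv φ) := hφC.continuous_deriv le_rfl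
  have hψn'c : Continuous (deriv ψn) := hψnC.continuous_deriv le_rfl
  have hφc : Continuous φ := hφC.continuous
  have hψnc : Continuous ψn := hψnC.continuous
  have hrc : Continuous rn := by rw [hrn]; fun_prop
  have hri : IntervalIntegrable (fun s => ‖rn s‖) volume 0 t := hrc.norm.intervalIntegrable _ _
  set E : ℝ → ℂ := fun s => Complex.exp (-((μ : ℂ) * (φ s - 1))) with hE
  have hEc : Continuous E := by rw [hE]; fun_prop
  have hEn : ∀ s, ‖E s‖ ≤ Real.exp (2 * μ) := by
    intro s
    rw [hE, Complex.norm_exp, Real.exp_le_exp]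
    simp only [Complex.neg_re, Complex.re_ofReal_mul, Complex.sub_re, Complex.one_re]
    nlinarith [hre s]
  have hderiv : ∀ s, HasDerivAt (fun s => -(E s * ψn s)) (E s * rn s) s := by
    intro s
    have h1 : HasDerivAt φ (deriv φ s) s :=
      (hφC.differentiable one_ne_zero s).hasDerivAt
    have h2 : HasDerivAt ψn (deriv ψn s) s :=
      (hψnC.differentiable one_ne_zero s).hasDerivAt
    have h3 := ((((h1.sub_const 1).const_mul (μ : ℂ)).neg.cexp).mul h2).neg
    refine h3.congr_deriv ?_
    simp only [hrn, hE, Pi.neg_apply]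
    ring
  have hFTC : ∫ s in (0 : ℝ)..t, E s * rn s = 1 - E t * ψn t := by
    rw [intervalIntegral.integral_eq_sub_of_hasDerivAt (fun s _ => hderiv s)
      ((hEc.mul hrc).intervalIntegrable _ _)]
    simp only [hE, hφ0, hψn0]
    simp
    ring
  have hbound : ‖1 - E t * ψn t‖ ≤ Real.exp (2 * μ) * ∫ s in (0 : ℝ)..t, ‖rn s‖ := by
    rw [← hFTC, ← intervalIntegral.integral_const_mul]
    refine intervalIntegral.norm_integral_le_of_norm_le ht (ae_of_all _ fun s _ => ?_)
      (hri.const_mul _)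
    rw [norm_mul]
    exact mul_le_mul_of_nonneg_right (hEn s) (norm_nonneg _)
  have hψ1 : ‖ψ t‖ ≤ 1 := by
    rw [hψ, Complex.norm_exp, Real.exp_le_one_iff]
    simp only [Complex.re_ofReal_mul, Complex.sub_re, Complex.one_re]
    nlinarith [hre t]
  have hψE : ψ t * E t = 1 := by
    simp only [hψ, hE]
    rw [← Complex.exp_add, add_neg_cancel, Complex.exp_zero]
  have hΔ : Δn t = ψ t * (1 - E t * ψn t) := by
    rw [hΔn]
    linear_combination ψn t * hψE
  constructor
  · rw [hΔ, norm_mul]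
    exact (mul_le_of_le_one_left (norm_nonneg _) hψ1).trans hbound
  · rw [mul_assoc]
    refine mul_le_mul_of_nonneg_left ?_ (Real.exp_pos _).le
    have h := intervalIntegral.integral_mono_on ht hri
      (intervalIntegrable_const (c := K)) hK
    simpa [mul_comm] using h
end

section
/- Under assumption (A1) on the triangular array, for every integer m ≥ 1 and every t ∈ ℝ, | ∑_{k=1}^n E[ i Y_{n,k} e^{itY_{n,k}} ( exp(it ∑_{j≠k} Y_{n,j}) − exp(it ∑_{|j−k|>m} Y_{n,j}) ) ] | ≤ 4 C1² m / n, where the inner sums run over indices j ∈ {1,…,n}. -/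
/-!
The two exponentials in the `k`-th summand differ only through the `Y_{n,j}` with
`0 < |j - k| ≤ m`. They agree where all of these vanish, and in any case their difference has
modulus at most `2`, so the integrand is bounded by `∑_j 2 |Y_{n,k}| 1{Y_{n,j} ≠ 0}` over the at
most `2m` such `j` (`norm_integrand_le`, `card_near_le`). By the last part of (A1) each expectation
is at most `4 m (C1/n)²`, and summing over the `n` values of `k` gives `4 C1² m / n`.
-/

open MeasureTheory ProbabilityTheory Filter Set

/-- The indices `j ∈ {1, …, n}` with `0 < |j - k| ≤ m`. -/
def near (n m k : ℕ) : Finset ℕ :=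
  ((Finset.Icc 1 n).erase k).filter fun j : ℕ => |(j : ℤ) - (k : ℤ)| ≤ (m : ℤ)

lemma card_near_le (n m k : ℕ) : (near n m k).card ≤ 2 * m := by
  have hsub : near n m k ⊆ (Finset.Icc (k - m) (k + m)).erase k := by
    intro j hj
    simp only [near, Finset.mem_filter, Finset.mem_erase, Finset.mem_Icc, abs_le] at hj ⊢
    omega
  refine (Finset.card_le_card hsub).trans ?_
  rw [Finset.card_erase_of_mem (by simp), Nat.card_Icc]
  omega

lemma norm_exp_I_mul (t x : ℝ) : ‖Complex.exp (Complex.I * t * x)‖ = 1 := by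
  have h : Complex.I * t * x = ((t * x : ℝ) : ℂ) * Complex.I := by push_cast; ring
  rw [h, Complex.norm_exp_ofReal_mul_I]

/-- The pointwise bound, for a fixed row `y` of the array. -/
lemma norm_integrand_le {Ω : Type*} (y : ℕ → Ω → ℝ) (n m k : ℕ) (t : ℝ) (ω : Ω) :
    ‖Complex.I * (y k ω : ℂ) * Complex.exp (Complex.I * t * y k ω) *
        (Complex.exp (Complex.I * t *
            ((∑ j ∈ (Finset.Icc 1 n).erase k, y j ω : ℝ) : ℂ)) -
         Complex.exp (Complex.I * t *
            ((∑ j ∈ (Finset.Icc 1 n).filter fun j : ℕ => (m : ℤ) < |(j : ℤ) - (k : ℤ)|,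
                y j ω : ℝ) : ℂ)))‖
      ≤ ∑ j ∈ near n m k, 2 * (|y k ω| * Set.indicator {ω' | y j ω' ≠ 0} 1 ω) := by
  have hnn : ∀ j ∈ near n m k,
      0 ≤ 2 * (|y k ω| * Set.indicator {ω' | y j ω' ≠ 0} (1 : Ω → ℝ) ω) := fun j _ =>
    mul_nonneg zero_le_two (mul_nonneg (abs_nonneg _)
      (Set.indicator_nonneg (fun _ _ => zero_le_one) _))
  rw [norm_mul, norm_mul, norm_mul, Complex.norm_I, norm_exp_I_mul, Complex.norm_real,
    Real.norm_eq_abs, one_mul, mul_one]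
  by_cases h : ∀ j ∈ near n m k, y j ω = 0
  · have hs : ∑ j ∈ (Finset.Icc 1 n).filter (fun j : ℕ => (m : ℤ) < |(j : ℤ) - (k : ℤ)|), y j ω
        = ∑ j ∈ (Finset.Icc 1 n).erase k, y j ω := by
      apply Finset.sum_subset
      · intro j hj
        simp only [Finset.mem_filter, Finset.mem_erase] at hj ⊢
        refine ⟨?_, hj.1⟩
        rintro rfl
        simp at hj
        omega
      · intro j hj hj'
        apply h
        simp only [near, Finset.mem_filter, Finset.mem_erase] at hj hj' ⊢
        exact ⟨hj, not_lt.1 fun hlt => hj' ⟨hj.2, hlt⟩⟩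
    rw [hs, sub_self, norm_zero, mul_zero]
    exact Finset.sum_nonneg hnn
  · push Not at h
    obtain ⟨j, hj, hne⟩ := h
    refine le_trans ?_ (Finset.single_le_sum hnn hj)
    rw [Set.indicator_of_mem (by exact hne), Pi.one_apply, mul_one, mul_comm 2]
    refine mul_le_mul_of_nonneg_left ((norm_sub_le _ _).trans ?_) (abs_nonneg _)
    rw [norm_exp_I_mul, norm_exp_I_mul]
    norm_num

/-- **Bound on `J₂`.** Under assumption (A1) on the triangular array, for every integer `m ≥ 1`
and every `t`,
`|∑_{k=1}^n E[i Y_{n,k} e^{itY_{n,k}} (exp(it ∑_{j≠k} Y_{n,j}) - exp(it ∑_{|j-k|>m} Y_{n,j}))]|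
  ≤ 4 C1² m / n`. -/
theorem J2_bound
    {Ω : Type*} {mΩ : MeasurableSpace Ω} (P : Measure Ω) [IsProbabilityMeasure P]
    (Y : ℕ → ℕ → Ω → ℝ)
    (hYint : ∀ n j, Integrable (Y n j) P)
    (hYmeas : ∀ n j, Measurable (Y n j))
    (C1 : ℝ) (hC1 : 0 < C1)
    -- assumption (A1)
    (hA1a : ∀ n, 1 ≤ n → ∀ j ∈ Finset.Icc 1 n,
      P {ω | Y n j ω ≠ 0} ≤ ENNReal.ofReal (C1 / n))
    (hA1b : ∀ n, 1 ≤ n → ∀ j ∈ Finset.Icc 1 n, ∫ ω, |Y n j ω| ∂P ≤ C1 / n)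
    (hA1c : ∀ n, 1 ≤ n → ∀ i ∈ Finset.Icc 1 n, ∀ j ∈ Finset.Icc 1 n, i ≠ j →
      ∫ ω, |Y n j ω| * Set.indicator {ω' | Y n i ω' ≠ 0} 1 ω ∂P ≤ (C1 / n) ^ 2) :
    ∀ n : ℕ, 1 ≤ n → ∀ m : ℕ, 1 ≤ m → ∀ t : ℝ,
      ‖∑ k ∈ Finset.Icc 1 n,
          ∫ ω, Complex.I * (Y n k ω : ℂ) * Complex.exp (Complex.I * t * Y n k ω) *
            (Complex.exp (Complex.I * t *
                ((∑ j ∈ (Finset.Icc 1 n).erase k, Y n j ω : ℝ) : ℂ)) -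
             Complex.exp (Complex.I * t *
                ((∑ j ∈ (Finset.Icc 1 n).filter fun j : ℕ => (m : ℤ) < |(j : ℤ) - (k : ℤ)|,
                    Y n j ω : ℝ) : ℂ))) ∂P‖
        ≤ 4 * C1 ^ 2 * m / n := by
  intro n hn m _ t
  have hn0 : (0 : ℝ) < n := by exact_mod_cast hn
  have hint : ∀ k j, Integrable
      (fun ω => 2 * (|Y n k ω| * Set.indicator {ω' | Y n j ω' ≠ 0} (1 : Ω → ℝ) ω)) P := by
    intro k j
    have hset : MeasurableSet {ω' | Y n j ω' ≠ 0} :=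
      (measurableSet_eq_fun (hYmeas n j) measurable_const).compl
    refine Integrable.const_mul ?_ 2
    refine ((hYint n k).abs.indicator hset).congr (Eventually.of_forall fun ω => ?_)
    by_cases hω : ω ∈ {ω' | Y n j ω' ≠ 0} <;> simp [Set.indicator, hω]
  have hk : ∀ k ∈ Finset.Icc 1 n,
      ‖∫ ω, Complex.I * (Y n k ω : ℂ) * Complex.exp (Complex.I * t * Y n k ω) *
            (Complex.exp (Complex.I * t *
                ((∑ j ∈ (Finset.Icc 1 n).erase k, Y n j ω : ℝ) : ℂ)) -
             Complex.exp (Complex.I * t *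
                ((∑ j ∈ (Finset.Icc 1 n).filter fun j : ℕ => (m : ℤ) < |(j : ℤ) - (k : ℤ)|,
                    Y n j ω : ℝ) : ℂ))) ∂P‖ ≤ 2 * m * (2 * (C1 / n) ^ 2) := by
    intro k hk
    refine (norm_integral_le_of_norm_le (integrable_finsetSum (near n m k) fun j _ => hint k j)
      (Eventually.of_forall fun ω => norm_integrand_le (Y n) n m k t ω)).trans ?_
    rw [integral_finsetSum _ fun j _ => hint k j]
    calc _ ≤ ∑ j ∈ near n m k, 2 * (C1 / n) ^ 2 := by
          refine Finset.sum_le_sum fun j hj => ?_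
          simp only [near, Finset.mem_filter, Finset.mem_erase] at hj
          rw [integral_const_mul]
          exact mul_le_mul_of_nonneg_left (hA1c n hn j hj.1.2 k hk hj.1.1) zero_le_two
      _ = (near n m k).card * (2 * (C1 / n) ^ 2) := by rw [Finset.sum_const, nsmul_eq_mul]
      _ ≤ 2 * m * (2 * (C1 / n) ^ 2) := by
          gcongr
          exact_mod_cast card_near_le n m k
  refine (norm_sum_le _ _).trans ((Finset.sum_le_sum hk).trans (le_of_eq ?_))
  rw [Finset.sum_const, Nat.card_Icc, Nat.add_sub_cancel, nsmul_eq_mul]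
  field_simp
  ring
end
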